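/- arXiv:1410.3814 — 3 statements merged into one kernel-verified Lean document; each statement's English description precedes it below -/
import Mathlib

section
/- A separable polynomial f(x) over a field F is indecomposable (cannot be written as g(h(x)) with deg g, deg h > 1) if and only if the Galois group of f(x) − t over F(t) acts primitively on the roots of f(x) − t. -/
open Polynomial MulAction

lemma aux_exists_val {F E : Type*} [Field F] [Field E] [Algebra F E] {x : E}
    (hx : Transcendental F x) :
    ∃ V : ValuationSubring E, (∀ a : F, algebraMap F E a ∈ V) ∧ x ∉ V := by
  have h0 : x ∉ (integralClosure F E).toSubring := by
    intro h
    exact hx (IsIntegral.isAlgebraic h)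
  have : IsIntegrallyClosedIn (integralClosure F E).toSubring E :=
    inferInstanceAs (IsIntegrallyClosedIn (integralClosure F E) E)
  obtain ⟨V, hV, hxV⟩ := Subring.exists_le_valuationSubring_of_isIntegrallyClosedIn h0
  exact ⟨V, fun a => hV ((integralClosure F E).algebraMap_mem a), hxV⟩

lemma aux_val_F {F E : Type*} [Field F] [Field E] [Algebra F E] (V : ValuationSubring E)
    (hV : ∀ a : F, algebraMap F E a ∈ V) (a : F) (ha : a ≠ 0) :
    V.valuation (algebraMap F E a) = 1 := by
  apply le_antisymm ((V.valuation_le_one_iff _).2 (hV a))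
  have := (V.valuation_le_one_iff _).2 (hV a⁻¹)
  rw [map_inv₀, map_inv₀] at this
  have h0 : V.valuation (algebraMap F E a) ≠ 0 := by simpa using ha
  exact (inv_le_one₀ (zero_lt_iff.2 h0)).1 this

lemma aux_val_le {F E : Type*} [Field F] [Field E] [Algebra F E] (V : ValuationSubring E)
    (hV : ∀ a : F, algebraMap F E a ∈ V) (z : E) (hz : z ∈ V) (f : F[X]) :
    aeval z f ∈ V := by
  rw [aeval_eq_sum_range]
  refine sum_mem fun i _ => ?_
  rw [Algebra.smul_def]
  exact mul_mem (hV _) (pow_mem hz _)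

lemma aux_val_aeval {F E : Type*} [Field F] [Field E] [Algebra F E] (V : ValuationSubring E)
    (hV : ∀ a : F, algebraMap F E a ∈ V) (z : E) (hz : z ∉ V) (f : F[X]) (hf : f ≠ 0) :
    V.valuation (aeval z f) = V.valuation z ^ f.natDegree := by
  have hz1 : 1 < V.valuation z := by
    rw [← not_le, V.valuation_le_one_iff]; exact hz
  have hl : V.valuation (algebraMap F E f.leadingCoeff) = 1 :=
    aux_val_F V hV _ (leadingCoeff_ne_zero.2 hf)
  rw [aeval_eq_sum_range, Finset.sum_range_succ, Valuation.map_add_eq_of_lt_right]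
  · rw [Algebra.smul_def, map_mul, map_pow]
    change V.valuation (algebraMap F E f.leadingCoeff) * _ = _
    rw [hl, one_mul]
  · rw [Algebra.smul_def, map_mul, map_pow]
    change _ < V.valuation (algebraMap F E f.leadingCoeff) * _ 
    rw [hl, one_mul]
    refine Valuation.map_sum_lt _ (pow_ne_zero _ (ne_of_gt (lt_trans zero_lt_one hz1))) fun i hi => ?_
    rw [Algebra.smul_def, map_mul, map_pow]
    refine lt_of_le_of_lt (mul_le_of_le_one_left' ((V.valuation_le_one_iff _).2 (hV _))) ?_
    exact pow_lt_pow_right₀ hz1 (Finset.mem_range.1 hi)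

lemma aux_val_eq {F E : Type*} [Field F] [Field E] [Algebra F E] (V : ValuationSubring E)
    (hV : ∀ a : F, algebraMap F E a ∈ V) (x y : E) (hx : x ∉ V) (f : F[X]) (hf : 0 < f.natDegree)
    (hxy : aeval y f = aeval x f) : V.valuation y = V.valuation x := by
  have hf0 : f ≠ 0 := by rintro rfl; simp at hf
  have hx1 : 1 < V.valuation x := by
    rw [← not_le, V.valuation_le_one_iff]; exact hx
  have h1 := aux_val_aeval V hV x hx f hf0
  have hy : y ∉ V := by
    intro hy
    have h2 := (V.valuation_le_one_iff _).2 (aux_val_le V hV y hy f)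
    rw [hxy, h1] at h2
    exact absurd h2 (not_le.2 (one_lt_pow₀ hx1 hf.ne'))
  have h2 := aux_val_aeval V hV y hy f hf0
  rw [hxy, h1] at h2
  exact ((pow_left_inj₀ zero_le zero_le hf.ne').1 h2).symm

lemma aux_degree {F E : Type*} [Field F] [Field E] [Algebra F E] (x : E)
    (hx : Transcendental F x) (f : F[X]) (hf : 0 < f.natDegree) (B : Finset E)
    (hB : ∀ y ∈ B, aeval y f = aeval x f) (h : F[X]) (hh : aeval x h = ∏ y ∈ B, y) :
    h.natDegree = B.card := by
  obtain ⟨V, hV, hxV⟩ := aux_exists_val hx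
  have hx1 : 1 < V.valuation x := by
    rw [← not_le, V.valuation_le_one_iff]; exact hxV
  have h1 : V.valuation (∏ y ∈ B, y) = V.valuation x ^ B.card := by
    rw [map_prod, Finset.prod_congr rfl (fun y hy => aux_val_eq V hV x y hxV f hf (hB y hy)),
      Finset.prod_const]
  have h0 : h ≠ 0 := by
    rintro rfl
    rw [← hh] at h1
    simp only [map_zero] at h1
    exact (pow_ne_zero _ (ne_of_gt (lt_trans zero_lt_one hx1))) h1.symm
  rw [← hh, aux_val_aeval V hV x hxV h h0] at h1
  exact pow_right_injective₀ (lt_trans zero_lt_one hx1) hx1.ne' h1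

lemma aux_expand {F : Type*} [Field F] (h : F[X]) (hh : 0 < h.natDegree) (n : ℕ) :
    ∀ f : F[X], f.natDegree < n →
    ∃ P : F[X][X], P.eval h = f ∧ ∀ i, (P.coeff i).natDegree < h.natDegree := by
  induction n with
  | zero => intro f hf; omega
  | succ n ih =>
    intro f hf
    have hr : (f % h).natDegree < h.natDegree := natDegree_mod_lt f hh.ne'
    by_cases hlt : f.natDegree < h.natDegree
    · refine ⟨C f, by simp, fun i => ?_⟩
      rw [coeff_C]; split_ifs <;> simp [hlt, hh]
    · have hq : (f / h).natDegree < n := by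
        by_cases h0 : f / h = 0
        · rw [h0, natDegree_zero]; omega
        · have := natDegree_lt_natDegree h0
            (degree_div_lt (by rintro rfl; simp at hlt; omega) (natDegree_pos_iff_degree_pos.1 hh))
          omega
      obtain ⟨P, hP, hPc⟩ := ih _ hq
      refine ⟨X * P + C (f % h), ?_, fun i => ?_⟩
      · simp [hP, EuclideanDomain.div_add_mod]
      · cases i with
        | zero => simpa using hr
        | succ i => simpa [coeff_C] using hPc i

lemma aux_decomp {F E : Type*} [Field F] [Field E] [Algebra F E] (x : E)
    (f h : F[X]) (B : Finset E) (hh : h.natDegree = B.card) (hB0 : x ∈ B)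
    (hc : Transcendental F (aeval x h))
    (hf : ∀ y ∈ B, aeval y f = aeval x f) (hhB : ∀ y ∈ B, aeval y h = aeval x h) :
    ∃ g : F[X], f = g.comp h := by
  classical
  have hpos : 0 < h.natDegree := by rw [hh]; exact Finset.card_pos.2 ⟨x, hB0⟩
  obtain ⟨P, hP, hPc⟩ := aux_expand h hpos _ f (Nat.lt_succ_self _)
  set c := aeval x h with hcdef
  set Q : E[X] := (∑ i ∈ Finset.range (P.natDegree + 1),
    C (c ^ i) * (P.coeff i).map (algebraMap F E)) - C (aeval x f) with hQ
  have hQ0 : Q = 0 := by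
    refine eq_zero_of_natDegree_lt_card_of_eval_eq_zero' Q B (fun y hy => ?_) ?_
    · rw [hQ, eval_sub, eval_C, ← hf y hy, sub_eq_zero, ← hP, eval_eq_sum_range (p := P), map_sum,
        eval_finsetSum]
      refine Finset.sum_congr rfl fun i _ => ?_
      rw [eval_mul, eval_C, map_mul, map_pow, hhB y hy, eval_map_algebraMap, mul_comm]
    · rw [← hh]
      refine lt_of_le_of_lt (b := h.natDegree - 1) ?_ (by omega)
      refine (natDegree_sub_le _ _).trans (max_le ?_ (by simp))
      refine natDegree_sum_le_of_forall_le _ _ fun i _ => ?_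
      refine (natDegree_C_mul_le _ _).trans (natDegree_map_le.trans ?_)
      have := hPc i; omega
  have hcoef : ∀ i j, 0 < j → (P.coeff i).coeff j = 0 := by
    intro i j hj
    set p : F[X] := ∑ i ∈ Finset.range (P.natDegree + 1), monomial i ((P.coeff i).coeff j) with hp
    have hpc : aeval c p = 0 := by
      have := congrArg (fun q => coeff q j) hQ0
      simp only [hQ, coeff_sub, finsetSum_coeff, coeff_C_mul, coeff_map, coeff_C, hj.ne',
        if_false, sub_zero, coeff_zero] at this
      rw [hp, map_sum, ← this]
      refine Finset.sum_congr rfl fun i _ => ?_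
      rw [aeval_monomial, mul_comm]
    have hp0 : p = 0 := by
      by_contra hne
      exact hc ⟨p, hne, hpc⟩
    by_cases hi : i ≤ P.natDegree
    · have := congrArg (fun q => coeff q i) hp0
      simp only [hp, finsetSum_coeff, coeff_monomial, coeff_zero] at this
      rw [Finset.sum_ite_eq' ] at this
      simpa [Nat.lt_succ_iff, hi] using this
    · rw [coeff_eq_zero_of_natDegree_lt (by omega : P.natDegree < i)]; simp
  refine ⟨∑ i ∈ Finset.range (P.natDegree + 1), monomial i ((P.coeff i).coeff 0), ?_⟩
  rw [← hP, eval_eq_sum_range, ← coe_compRingHom_apply, map_sum]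
  refine Finset.sum_congr rfl fun i _ => ?_
  rw [coe_compRingHom_apply, monomial_comp]
  congr 1
  ext j
  rcases Nat.eq_zero_or_pos j with rfl | hj
  · simp
  · rw [hcoef i j hj, coeff_C, if_neg hj.ne']

lemma aux_transc {F E : Type*} [Field F] [Field E] [Algebra F E] [Algebra (RatFunc F) E]
    [IsScalarTower F (RatFunc F) E] (f : F[X]) (x : E)
    (hx : aeval x f = algebraMap (RatFunc F) E RatFunc.X) : Transcendental F x := by
  have h1 : Transcendental F (algebraMap (RatFunc F) E RatFunc.X) :=
    (transcendental_algebraMap_iff (algebraMap (RatFunc F) E).injective).2 RatFunc.transcendental_X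
  rw [← hx] at h1
  exact fun h => (transcendental_aeval_iff.1 h1).1 h

lemma aux_prod_mem {F E : Type*} [Field F] [Field E] [Algebra F E] [Algebra (RatFunc F) E]
    [IsScalarTower F (RatFunc F) E] [FiniteDimensional (RatFunc F) E] [IsGalois (RatFunc F) E]
    (f : F[X])
    (x : E) (hx : aeval x f = algebraMap (RatFunc F) E RatFunc.X) (c : E)
    (hc : ∀ σ : E ≃ₐ[RatFunc F] E, σ x = x → σ c = c)
    (hint : ∀ A : Subring E, x ∈ A → (∀ a : F, algebraMap F E a ∈ A) → IsIntegral A c) :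
    ∃ h : F[X], aeval x h = c := by
  have hxt := aux_transc f x hx
  have hinj : Function.Injective (aeval x : F[X] →ₐ[F] E) := transcendental_iff_injective.1 hxt
  let φ : RatFunc F →+* E := IsFractionRing.lift (A := F[X]) (g := (aeval x : F[X] →ₐ[F] E).toRingHom) hinj
  have hφ : ∀ p : F[X], φ (algebraMap F[X] (RatFunc F) p) = aeval x p :=
    fun p => IsFractionRing.lift_algebraMap (A := F[X]) hinj p
  have hK : ∀ r : RatFunc F, algebraMap (RatFunc F) E r ∈ φ.fieldRange := by
    intro r
    have hp : ∀ p : F[X], algebraMap (RatFunc F) E (algebraMap F[X] (RatFunc F) p) ∈ φ.fieldRange := by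
      intro p
      refine ⟨algebraMap F[X] (RatFunc F) (p.comp f), ?_⟩
      rw [hφ, aeval_comp, hx, aeval_algebraMap_apply]
      congr 1
      rw [← RatFunc.algebraMap_X, aeval_algebraMap_apply]
      simp
    rw [← RatFunc.num_div_denom r, map_div₀]
    exact div_mem (hp _) (hp _)
  let L : IntermediateField (RatFunc F) E := φ.fieldRange.toIntermediateField hK
  have hxL : x ∈ L := ⟨algebraMap F[X] (RatFunc F) X, by rw [hφ, aeval_X]⟩
  have hcL : c ∈ L := by
    rw [← IsGalois.fixedField_fixingSubgroup L, IntermediateField.mem_fixedField_iff]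
    intro σ hσ
    exact hc σ ((IntermediateField.mem_fixingSubgroup_iff L σ).1 hσ x hxL)
  obtain ⟨r, hr⟩ := hcL
  let A : Subring E := (aeval x : F[X] →ₐ[F] E).toRingHom.range
  have hcA := hint A ⟨X, aeval_X x⟩ (fun a => ⟨C a, aeval_C x a⟩)
  have hri : IsIntegral F[X] r := by
    obtain ⟨p, hp, hpc⟩ := hcA
    let q : F[X] →+* A := (aeval x : F[X] →ₐ[F] E).toRingHom.rangeRestrict
    have hq : Function.Surjective q := RingHom.rangeRestrict_surjective _
    obtain ⟨P, hP, -, hPm⟩ := lifts_and_natDegree_eq_and_monic (map_surjective q hq p) hp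
    refine ⟨P, hPm, φ.injective ?_⟩
    rw [map_zero, hom_eval₂, hr, ← hpc, ← hP, eval₂_map]
    congr 1
    ext a
    · exact hφ (C a)
    · exact hφ X
  obtain ⟨h, hh⟩ := (IsIntegrallyClosed.isIntegral_iff (R := F[X])).1 hri
  exact ⟨h, by rw [← hφ, hh]; exact hr⟩

lemma aux_int {F E : Type*} [Field F] [Field E] [Algebra F E]
    (f : F[X]) (hf : 0 < f.natDegree) (x y : E) (hy : aeval y f = aeval x f) (A : Subring E)
    (hxA : x ∈ A) (hFA : ∀ a : F, algebraMap F E a ∈ A) : IsIntegral A y := by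
  have hf0 : f ≠ 0 := by rintro rfl; simp at hf
  set f' : F[X] := f * C f.leadingCoeff⁻¹ with hf'
  have hm : f'.Monic := monic_mul_leadingCoeff_inv hf0
  have hd : f'.natDegree = f.natDegree := natDegree_mul_leadingCoeff_inv _ hf0
  have hy' : aeval y f' = aeval x f' := by rw [hf', map_mul, map_mul, hy, aeval_C, aeval_C]
  have hmem : aeval x f' ∈ A := by
    rw [aeval_eq_sum_range]
    refine sum_mem fun i _ => ?_
    rw [Algebra.smul_def]
    exact mul_mem (hFA _) (pow_mem hxA _)
  let i : F →+* A := (algebraMap F E).codRestrict A hFA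
  refine ⟨f'.map i - C ⟨aeval x f', hmem⟩, ?_, ?_⟩
  · refine (hm.map i).sub_of_left ?_
    refine lt_of_le_of_lt degree_C_le ?_
    rw [hm.degree_map, ← natDegree_pos_iff_degree_pos, hd]
    exact hf
  · rw [eval₂_sub, eval₂_C, eval₂_map, sub_eq_zero]
    exact hy'

lemma aux_main {F E : Type*} [Field F] [Field E] [Algebra F E] [Algebra (RatFunc F) E]
    [IsScalarTower F (RatFunc F) E] [FiniteDimensional (RatFunc F) E] [IsGalois (RatFunc F) E]
    (f : F[X]) (hf : 0 < f.natDegree) (B : Finset E)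
    (hB : ∀ y ∈ B, aeval y f = algebraMap (RatFunc F) E RatFunc.X)
    (x : E) (hxB : x ∈ B)
    (hblock : ∀ σ : E ≃ₐ[RatFunc F] E, σ x ∈ B → ∀ y ∈ B, σ y ∈ B)
    (htrans : ∀ y ∈ B, ∃ σ : E ≃ₐ[RatFunc F] E, σ x = y) :
    ∃ g h : F[X], h.natDegree = B.card ∧ f = g.comp h := by
  classical
  have hx := hB x hxB
  have hBx : ∀ y ∈ B, aeval y f = aeval x f := fun y hy => by rw [hx, hB y hy]
  have hxt := aux_transc f x hx
  have hprod : ∀ σ : E ≃ₐ[RatFunc F] E, σ x ∈ B → σ (∏ y ∈ B, y) = ∏ y ∈ B, y := by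
    intro σ hσ
    have him : B.image σ = B :=
      Finset.eq_of_subset_of_card_le (Finset.image_subset_iff.2 (hblock σ hσ))
        (by rw [Finset.card_image_of_injective _ σ.injective])
    rw [map_prod]
    conv_rhs => rw [← him, Finset.prod_image σ.injective.injOn]
  obtain ⟨h, hh⟩ := aux_prod_mem f x hx (∏ y ∈ B, y)
    (fun σ hσ => hprod σ (by rw [hσ]; exact hxB)) (by
      intro A hxA hFA
      refine IsIntegral.prod _ fun y hy => ?_
      exact aux_int f hf x y (hBx y hy) A hxA hFA)
  have hdeg := aux_degree x hxt f hf B hBx h hh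
  have hpos : 0 < h.natDegree := by rw [hdeg]; exact Finset.card_pos.2 ⟨x, hxB⟩
  have hhB : ∀ y ∈ B, aeval y h = aeval x h := by
    intro y hy
    obtain ⟨σ, rfl⟩ := htrans y hy
    have h1 := hprod σ hy
    rw [← hh] at h1
    conv_rhs => rw [← h1]
    exact (aeval_algHom_apply ((σ : E →ₐ[RatFunc F] E).restrictScalars F) x h)
  have hc : Transcendental F (aeval x h) := by
    refine hxt.aeval h hpos.ne' ?_
    exact mem_nonZeroDivisors_of_ne_zero (leadingCoeff_ne_zero.2 (by rintro rfl; simp at hpos))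
  obtain ⟨g, hg⟩ := aux_decomp x f h B hdeg hxB hc hBx hhB
  exact ⟨g, h, hdeg, hg⟩

lemma aux_irred {F : Type*} [Field F] (f : F[X]) (hf : 0 < f.natDegree) :
    Irreducible (f.map (algebraMap F (RatFunc F)) - C RatFunc.X) := by
  let φ : F[X][X] := f.map (algebraMap F F[X]) - C X
  have hφ : φ.map (algebraMap F[X] (RatFunc F)) =
      f.map (algebraMap F (RatFunc F)) - C RatFunc.X := by
    simp only [φ, Polynomial.map_sub, Polynomial.map_map, map_C, RatFunc.algebraMap_X,
      ← IsScalarTower.algebraMap_eq]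
  have h1 : φ = Bivariate.swap (C f - X) := by
    rw [map_sub, Bivariate.swap_C, Bivariate.swap_Y]; rfl
  have h2 : Irreducible φ := by
    rw [h1, MulEquiv.irreducible_iff]
    have h3 : Associated (X - C f) (C f - X) := ⟨-1, by simp⟩
    exact h3.irreducible (irreducible_X_sub_C f)
  have hd : φ.natDegree = f.natDegree := by
    rw [natDegree_sub_C, natDegree_map_eq_of_injective (algebraMap F F[X]).injective]
  rw [← hφ, ← IsPrimitive.irreducible_iff_irreducible_map_fraction_map]
  · exact h2
  · exact h2.isPrimitive (by omega)

lemma aux_count {F E : Type*} [Field F] [Field E] [Algebra F E] (f g h : F[X])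
    (hf : f = g.comp h) (hh : 0 < h.natDegree) (x t : E) (hx : aeval x f = t)
    (hs : (f.map (algebraMap F E) - C t).Splits) (hsep : (f.map (algebraMap F E) - C t).Separable) :
    ∃ S : Finset E, S.card = h.natDegree ∧ ∀ y, y ∈ S ↔ aeval y h = aeval x h := by
  classical
  set q : E[X] := h.map (algebraMap F E) - C (aeval x h) with hq
  have hqd : q.natDegree = h.natDegree := by
    rw [hq, natDegree_sub_C, natDegree_map]
  have hq0 : q ≠ 0 := by
    intro h0; rw [h0, natDegree_zero] at hqd; omega
  have hdvd : q ∣ f.map (algebraMap F E) - C t := by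
    have := sub_dvd_eval_sub (h.map (algebraMap F E)) (C (aeval x h))
      ((g.map (algebraMap F E)).map C)
    convert! this using 2
    · rw [hf, map_comp, eval_map]; rfl
    · rw [← hx, hf, aeval_comp, eval_map, eval₂_hom, eval_map_algebraMap]
  have hqs : q.Splits := hs.of_dvd hsep.ne_zero hdvd
  have hqsep : q.Separable := hsep.of_dvd hdvd
  refine ⟨q.roots.toFinset, ?_, fun y => ?_⟩
  · rw [Multiset.toFinset_card_of_nodup (nodup_roots hqsep), ← hqs.natDegree_eq_card_roots, hqd]
  · rw [Multiset.mem_toFinset, mem_roots hq0, IsRoot.def, hq, eval_sub, eval_C,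
      eval_map_algebraMap, sub_eq_zero]

theorem indecomposable_iff_gal_primitive
    (F : Type*) [Field F] (f : Polynomial F) (hsep : f.Separable) :
    ∀ ft : Polynomial (RatFunc F),
      ft = f.map (algebraMap F (RatFunc F)) - Polynomial.C RatFunc.X →
    ((¬ ∃ g h : Polynomial F, 1 < g.natDegree ∧ 1 < h.natDegree ∧ f = g.comp h) ↔
      (MulAction.IsPretransitive ft.Gal (ft.rootSet ft.SplittingField) ∧
        ∀ B : Set (ft.rootSet ft.SplittingField),
          MulAction.IsBlock ft.Gal B → MulAction.IsTrivialBlock B)) := by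
  intro ft hft
  classical
  rcases Nat.eq_zero_or_pos f.natDegree with hd0 | hd
  · have hC : ∃ c, ft = C c := by
      rw [eq_C_of_natDegree_eq_zero hd0] at hft
      exact ⟨algebraMap F (RatFunc F) (f.coeff 0) - RatFunc.X, by rw [hft]; simp⟩
    have hemp : IsEmpty (ft.rootSet ft.SplittingField) := by
      obtain ⟨c, hc⟩ := hC
      have : ft.rootSet ft.SplittingField = ∅ := by
        have hmap : ft.map (algebraMap (RatFunc F) ft.SplittingField) =
            C (algebraMap (RatFunc F) ft.SplittingField c) :=
          (congrArg (Polynomial.map (algebraMap (RatFunc F) ft.SplittingField)) hc).trans (map_C _)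
        rw [rootSet, aroots, hmap, roots_C]
        simp
      rw [this]; infer_instance
    refine ⟨fun _ => ⟨⟨fun x => hemp.elim x⟩, fun B _ => Or.inl fun x => hemp.elim x⟩, ?_⟩
    rintro - ⟨g, h, hg, hh, rfl⟩
    rw [natDegree_comp] at hd0
    have := Nat.mul_pos (by omega : 0 < g.natDegree) (by omega : 0 < h.natDegree)
    omega
  have hirr : Irreducible ft := by rw [hft]; exact aux_irred f hd
  have hder : derivative f ≠ 0 := by
    intro h0
    rw [separable_def, h0, isCoprime_zero_right] at hsep
    have := natDegree_eq_zero_of_isUnit hsep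
    omega
  have hftsep : ft.Separable := by
    rw [separable_iff_derivative_ne_zero hirr, hft, derivative_sub, derivative_C, sub_zero,
      derivative_map]
    exact (Polynomial.map_ne_zero_iff (algebraMap F (RatFunc F)).injective).2 hder
  have hgal : IsGalois (RatFunc F) ft.SplittingField := IsGalois.of_separable_splitting_field hftsep
  have hftE : ft.map (algebraMap (RatFunc F) ft.SplittingField) =
      f.map (algebraMap F ft.SplittingField) -
        C (algebraMap (RatFunc F) ft.SplittingField RatFunc.X) := by
    refine (congrArg (Polynomial.map (algebraMap (RatFunc F) ft.SplittingField)) hft).trans ?_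
    rw [Polynomial.map_sub, Polynomial.map_map, map_C, ← IsScalarTower.algebraMap_eq]
  have hroot : ∀ y : ft.SplittingField, y ∈ ft.rootSet ft.SplittingField ↔
      aeval y f = algebraMap (RatFunc F) ft.SplittingField RatFunc.X := by
    intro y
    rw [mem_rootSet_of_ne hirr.ne_zero, ← eval_map_algebraMap, hftE, eval_sub, eval_C,
      eval_map_algebraMap, sub_eq_zero]
  have hsplits := SplittingField.splits ft
  have hcard : Fintype.card (ft.rootSet ft.SplittingField) = f.natDegree := by
    rw [card_rootSet_eq_natDegree hftsep hsplits, hft, natDegree_sub_C, natDegree_map]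
  have hsmul : ∀ (σ : ft.Gal) (y : ft.rootSet ft.SplittingField),
      ((σ • y : ft.rootSet ft.SplittingField) : ft.SplittingField) =
        (show ft.SplittingField ≃ₐ[RatFunc F] ft.SplittingField from σ) y := fun _ _ => rfl
  have htr : MulAction.IsPretransitive ft.Gal (ft.rootSet ft.SplittingField) := by
    refine ⟨fun x y => ?_⟩
    have hx := minpoly.eq_of_irreducible hirr (mem_rootSet.mp x.2).2
    have hy := minpoly.eq_of_irreducible hirr (mem_rootSet.mp y.2).2
    obtain ⟨g, hg⟩ := (Normal.minpoly_eq_iff_mem_orbit ft.SplittingField).mp (hy.symm.trans hx)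
    exact ⟨g, Subtype.ext hg⟩
  constructor
  · intro hind
    refine ⟨htr, fun B hB => ?_⟩
    by_contra hnt
    simp only [IsTrivialBlock, not_or, Set.not_subsingleton_iff] at hnt
    obtain ⟨⟨x, hx, x', hx', hne⟩, huniv⟩ := hnt
    let B' : Finset ft.SplittingField := B.toFinset.image Subtype.val
    have hmem : ∀ y : ft.rootSet ft.SplittingField, (y : ft.SplittingField) ∈ B' ↔ y ∈ B := by
      intro y
      simp only [B', Finset.mem_image, Set.mem_toFinset]
      exact ⟨fun ⟨z, hz, he⟩ => by rwa [← Subtype.ext he], fun h => ⟨y, h, rfl⟩⟩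
    have hmem' : ∀ y ∈ B', ∃ z ∈ B, (z : ft.SplittingField) = y := by
      intro y hy
      simpa only [B', Finset.mem_image, Set.mem_toFinset] using hy
    have hBc : B'.card = B.toFinset.card :=
      Finset.card_image_of_injective _ Subtype.val_injective
    have hB1 : 1 < B.toFinset.card :=
      Finset.one_lt_card.2 ⟨x, Set.mem_toFinset.2 hx, x', Set.mem_toFinset.2 hx', hne⟩
    have hBn : B.toFinset.card < f.natDegree := by
      rw [← hcard]
      refine Finset.card_lt_univ_of_notMem (x := ?_) ?_
      · exact ((Set.ne_univ_iff_exists_notMem B).1 huniv).choose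
      · rw [Set.mem_toFinset]
        exact ((Set.ne_univ_iff_exists_notMem B).1 huniv).choose_spec
    obtain ⟨g, h, hh, hgh⟩ := aux_main f hd B' (by
        intro y hy
        obtain ⟨z, -, rfl⟩ := hmem' y hy
        exact (hroot _).1 z.2) x ((hmem x).2 hx) (by
        intro σ hσ y hy
        obtain ⟨z, hz, rfl⟩ := hmem' y hy
        have h1 : (show ft.Gal from σ) • x ∈ B := (hmem _).1 hσ
        have h2 := (isBlock_iff_smul_eq_of_mem.1 hB) hx h1
        have h3 : (show ft.Gal from σ) • z ∈ B := by
          rw [← h2]; exact Set.smul_mem_smul_set hz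
        exact (hmem _).2 h3) (by
        intro y hy
        obtain ⟨z, hz, rfl⟩ := hmem' y hy
        obtain ⟨σ, hσ⟩ := htr.exists_smul_eq x z
        exact ⟨σ, congrArg Subtype.val hσ⟩)
    refine hind ⟨g, h, ?_, by omega, hgh⟩
    rw [hgh, natDegree_comp, hh, hBc] at hBn
    by_contra hg
    have : g.natDegree * B.toFinset.card ≤ 1 * B.toFinset.card := Nat.mul_le_mul_right _ (by omega)
    have hd' := hd
    rw [hgh, natDegree_comp] at hd'
    have hg1 : g.natDegree = 1 := by
      have := Nat.pos_of_mul_pos_right hd'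
      omega
    rw [hg1] at hBn
    omega
  · rintro ⟨-, hprim⟩ ⟨g, h, hg, hh, hgh⟩
    have hne : Nonempty (ft.rootSet ft.SplittingField) := by
      rw [← Fintype.card_pos_iff, hcard]; exact hd
    obtain ⟨x⟩ := hne
    obtain ⟨S, hSc, hS⟩ := aux_count f g h hgh (by omega) (x : ft.SplittingField) _
      ((hroot _).1 x.2) (hftE ▸ hsplits) (hftE ▸ hftsep.map)
    let B : Set (ft.rootSet ft.SplittingField) := {y | aeval (y : ft.SplittingField) h = aeval (x : ft.SplittingField) h}
    have hσh : ∀ (σ : ft.Gal) (y : ft.rootSet ft.SplittingField),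
        aeval ((σ • y : ft.rootSet ft.SplittingField) : ft.SplittingField) h =
        (show ft.SplittingField ≃ₐ[RatFunc F] ft.SplittingField from σ)
          (aeval (y : ft.SplittingField) h) := by
      intro σ y
      exact aeval_algHom_apply (((show ft.SplittingField ≃ₐ[RatFunc F] ft.SplittingField from σ) :
        ft.SplittingField →ₐ[RatFunc F] ft.SplittingField).restrictScalars F) _ h
    have hBS : B.toFinset.image Subtype.val = S := by
      ext y
      rw [hS, Finset.mem_image]
      constructor
      · rintro ⟨z, hz, rfl⟩
        have hz' : z ∈ B := Set.mem_toFinset.1 hz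
        exact hz'
      · intro hy
        have hyr : y ∈ ft.rootSet ft.SplittingField := by
          rw [hroot, ← (hroot _).1 x.2, hgh, aeval_comp, aeval_comp, hy]
        exact ⟨⟨y, hyr⟩, Set.mem_toFinset.2 hy, rfl⟩
    have hBc : B.toFinset.card = h.natDegree := by
      rw [← hSc, ← hBS, Finset.card_image_of_injective _ Subtype.val_injective]
    have hsub : ∀ (σ : ft.Gal) (a : ft.rootSet ft.SplittingField), a ∈ B → σ • a ∈ B →
        ∀ y ∈ B, σ • y ∈ B := by
      intro σ a ha hσa y hy
      have ha' : aeval (a : ft.SplittingField) h = aeval (x : ft.SplittingField) h := ha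
      have hy' : aeval (y : ft.SplittingField) h = aeval (x : ft.SplittingField) h := hy
      have h1 : _ = _ := (hσh σ a).symm.trans hσa
      rw [ha', ← hy'] at h1
      exact (hσh σ y).trans (h1.trans hy')
    have hblock : IsBlock ft.Gal B := by
      rw [isBlock_iff_smul_eq_of_mem]
      intro σ a ha hσa
      apply Set.Subset.antisymm
      · rintro _ ⟨y, hy, rfl⟩
        exact hsub σ a ha hσa y hy
      · intro y hy
        rw [Set.mem_smul_set_iff_inv_smul_mem]
        exact hsub σ⁻¹ (σ • a) hσa (by rwa [inv_smul_smul]) y hy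
    rcases hprim B hblock with hss | hun
    · have : B.toFinset.card ≤ 1 :=
        Finset.card_le_one.2 fun a ha b hb => hss (Set.mem_toFinset.1 ha) (Set.mem_toFinset.1 hb)
      omega
    · have h1 : B.toFinset.card = f.natDegree := by
        rw [← hcard, ← Finset.card_univ]
        congr 1
        ext y
        simp [hun]
      rw [hBc, hgh, natDegree_comp] at h1
      nlinarith
end

section
/- Let k be an algebraically closed field of characteristic 2 and f(x) = a₂x² + a₁x + a₀ ∈ k[x] with a₂a₁ ≠ 0. Then for every n ≥ 1, the Galois group of fⁿ(x) − t over k(t) is isomorphic to (C₂)ⁿ, the direct product of n copies of the cyclic group of order 2. -/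
open Polynomial

namespace GalIter

theorem natDegree_iter {k : Type*} [Field k] (f : k[X]) (hf : f.natDegree = 2) (n : ℕ) :
    ((fun q : k[X] => f.comp q)^[n] X).natDegree = 2 ^ n := by
  induction n with
  | zero => simp
  | succ n ih => rw [Function.iterate_succ_apply', natDegree_comp, hf, ih]; ring

theorem deriv_iter {k : Type*} [Field k] (f : k[X]) (a : k) (hf : derivative f = C a) (n : ℕ) :
    derivative ((fun q : k[X] => f.comp q)^[n] X) = C (a ^ n) := by
  induction n with
  | zero => simp
  | succ n ih => rw [Function.iterate_succ_apply', derivative_comp, hf, ih, C_comp, ← C_mul]; ring_nf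

theorem quad_const {k E : Type*} [Field k] [IsAlgClosed k] [Field E] [Algebra k E] [CharP E 2]
    (a₂ a₁ c : k) (h₂ : a₂ ≠ 0) (d : E)
    (hd : algebraMap k E a₂ * d ^ 2 + algebraMap k E a₁ * d = algebraMap k E c) :
    ∃ e : k, d = algebraMap k E e := by
  have hint : IsIntegral k d := by
    rw [← isAlgebraic_iff_isIntegral]
    refine ⟨C a₂ * X ^ 2 + C a₁ * X + C (-c), ?_, ?_⟩
    · intro h0
      have := natDegree_quadratic (b := a₁) (c := -c) h₂
      rw [h0] at this
      simp at this
    · simp [hd]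
  have h1 := IsAlgClosed.degree_eq_one_of_irreducible k (minpoly.irreducible hint)
  obtain ⟨e, he⟩ := minpoly.mem_range_of_degree_eq_one k d h1
  exact ⟨e, he.symm⟩

theorem diff_const {k E : Type*} [Field k] [IsAlgClosed k] [Field E] [Algebra k E] [CharP E 2]
    (a₂ a₁ a₀ : k) (h₂ : a₂ ≠ 0) (f : k[X]) (hf : f = C a₂ * X ^ 2 + C a₁ * X + C a₀)
    (n : ℕ) (α β : E) : ∀ c : k,
    aeval β ((fun q : k[X] => f.comp q)^[n] X) - aeval α ((fun q : k[X] => f.comp q)^[n] X)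
      = algebraMap k E c → ∃ e : k, β - α = algebraMap k E e := by
  induction n with
  | zero => intro c hc; exact ⟨c, by simpa using hc⟩
  | succ n ih =>
    intro c hc
    rw [Function.iterate_succ_apply'] at hc
    generalize hF : (fun q : k[X] => f.comp q)^[n] X = F at *
    obtain ⟨e, he⟩ := quad_const a₂ a₁ c h₂ (aeval β F - aeval α F) (by
      rw [← hc, hf]
      simp only [aeval_comp, map_add, map_mul, map_pow, aeval_C, aeval_X, sub_eq_add_neg, CharTwo.neg_eq]
      linear_combination (algebraMap k E a₂ * aeval β F * aeval α F - algebraMap k E a₀) * (CharTwo.two_eq_zero : (2 : E) = 0))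
    exact ih e he

theorem irred {k : Type*} [Field k] (F : k[X]) (hF : F.natDegree ≠ 0) :
    Irreducible (F.map (algebraMap k (RatFunc k)) - C RatFunc.X) := by
  let φ : k[X][X] := F.map C - C X
  have h1 : φ = Bivariate.swap (C F - X) := by
    rw [map_sub, Bivariate.swap_C, Bivariate.swap_Y]
  have h2 : Irreducible φ := by
    rw [h1, MulEquiv.irreducible_iff, ← neg_sub]
    exact (Associated.refl (X - C F)).neg_left.irreducible_iff.2 (irreducible_X_sub_C F)
  have h3 : φ.natDegree ≠ 0 := by
    simp only [φ]
    rw [natDegree_sub_C, natDegree_map_eq_of_injective C_injective]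
    exact hF
  have h4 := (h2.isPrimitive h3).irreducible_iff_irreducible_map_fraction_map (K := RatFunc k)
  have h5 := h4.1 h2
  have h6 : φ.map (algebraMap k[X] (RatFunc k)) =
      F.map (algebraMap k (RatFunc k)) - C RatFunc.X := by
    simp only [φ, Polynomial.map_sub, Polynomial.map_map, map_C, RatFunc.algebraMap_X]
    rw [IsScalarTower.algebraMap_eq k k[X] (RatFunc k)]
    rfl
  rwa [h6] at h5

theorem group_iso (G : Type*) [Group G] (n : ℕ) (hG : ∀ g : G, g * g = 1)
    (hc : Nat.card G = 2 ^ n) : Nonempty (G ≃* (Fin n → Multiplicative (ZMod 2))) := by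
  let : CommGroup G := { (inferInstance : Group G) with
    mul_comm := fun a b => by
      have hi : ∀ g : G, g⁻¹ = g := fun g => inv_eq_of_mul_eq_one_left (hG g)
      rw [← hi (a * b), mul_inv_rev, hi, hi] }
  have : Finite G := Nat.finite_of_card_ne_zero (by rw [hc]; positivity)
  let : Module (ZMod 2) (Additive G) := AddCommGroup.zmodModule (fun x => by
    rw [two_nsmul]; exact hG x)
  have : Fact (Nat.Prime 2) := ⟨Nat.prime_two⟩
  have : Module.Finite (ZMod 2) (Additive G) := Module.Finite.of_finite
  have hr : Module.finrank (ZMod 2) (Additive G) = n := by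
    have := Module.natCard_eq_pow_finrank (K := ZMod 2) (V := Additive G)
    rw [Nat.card_zmod] at this
    have h2 : Nat.card (Additive G) = 2 ^ n := hc
    exact (Nat.pow_right_injective le_rfl (h2.symm.trans this)).symm
  let e : Additive G ≃ₗ[ZMod 2] (Fin n → ZMod 2) := LinearEquiv.ofFinrankEq _ _ (by simp [hr])
  exact ⟨{ toFun := fun g i => Multiplicative.ofAdd (e (Additive.ofMul g) i)
           invFun := fun v => (e.symm (fun i => (v i).toAdd)).toMul
           left_inv := fun g => by simp
           right_inv := fun v => by ext i; simp
           map_mul' := fun a b => by ext i; simp }⟩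

end GalIter

/-- Let `k` be an algebraically closed field of characteristic `2` and
`f(x) = a₂x² + a₁x + a₀ ∈ k[x]` with `a₂a₁ ≠ 0`.  Then for every `n ≥ 1` the Galois
group of `fⁿ(x) − t` over `k(t)` is isomorphic to `(C₂)ⁿ`. -/
theorem gal_iterate_quadratic_char_two
    (k : Type*) [Field k] [IsAlgClosed k] [CharP k 2]
    (a₂ a₁ a₀ : k) (h : a₂ * a₁ ≠ 0)
    (f : Polynomial k) (hf : f = C a₂ * X ^ 2 + C a₁ * X + C a₀) :
    ∀ n : ℕ, 1 ≤ n →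
      ∀ P : Polynomial (RatFunc k),
        P = ((fun q : Polynomial k => f.comp q)^[n] X).map (algebraMap k (RatFunc k))
              - C RatFunc.X →
        Nonempty (P.Gal ≃* (Fin n → Multiplicative (ZMod 2))) := by
  intro n hn P hP
  have h₂ : a₂ ≠ 0 := left_ne_zero_of_mul h
  have h₁ : a₁ ≠ 0 := right_ne_zero_of_mul h
  have hfd : f.natDegree = 2 := by rw [hf]; exact natDegree_quadratic h₂
  have hder : derivative f = C a₁ := by
    rw [hf]; simp [one_add_one_eq_two, CharTwo.two_eq_zero]
  have hFd := GalIter.natDegree_iter f hfd n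
  have hFder := GalIter.deriv_iter f a₁ hder n
  have hirr : Irreducible P := by
    rw [hP]; exact GalIter.irred _ (by rw [hFd]; positivity)
  have hdeg : P.natDegree = 2 ^ n := by
    rw [hP, natDegree_sub_C, natDegree_map, hFd]
  have hsep : P.Separable := by
    rw [separable_iff_derivative_ne_zero hirr, hP, derivative_sub, derivative_map, hFder]
    simp [h₁]
  have : CharP (RatFunc k) 2 := charP_of_injective_algebraMap (algebraMap k (RatFunc k)).injective 2
  have : CharP P.SplittingField 2 :=
    charP_of_injective_algebraMap (algebraMap k P.SplittingField).injective 2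
  have haev : ∀ x ∈ P.rootSet P.SplittingField,
      aeval x ((fun q : Polynomial k => f.comp q)^[n] X)
        = algebraMap (RatFunc k) P.SplittingField RatFunc.X := by
    intro x hx
    have := (mem_rootSet.1 hx).2
    have h3 : aeval x (((fun q : Polynomial k => f.comp q)^[n] X).map (algebraMap k (RatFunc k))
              - C RatFunc.X) = 0 := by rw [← hP]; exact this
    rw [map_sub, aeval_map_algebraMap, aeval_C, sub_eq_zero] at h3
    exact h3
  have hdiff : ∀ x ∈ P.rootSet P.SplittingField, ∀ y ∈ P.rootSet P.SplittingField,
      ∃ e : k, y - x = algebraMap k P.SplittingField e := by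
    intro x hx y hy
    exact GalIter.diff_const a₂ a₁ a₀ h₂ f hf n x y 0 (by rw [haev x hx, haev y hy]; simp)
  have hk : ∀ (σ : P.Gal) (e : k),
      σ (algebraMap k P.SplittingField e) = algebraMap k P.SplittingField e := by
    intro σ e
    rw [IsScalarTower.algebraMap_apply k (RatFunc k) P.SplittingField]
    exact AlgEquiv.commutes σ _
  apply GalIter.group_iso
  · intro σ
    apply Polynomial.Gal.ext
    intro x hx
    have hσx : σ x ∈ P.rootSet P.SplittingField := by
      rw [mem_rootSet] at hx ⊢
      refine ⟨hx.1, ?_⟩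
      have := aeval_algHom_apply (AlgEquiv.toAlgHom σ) x P
      rw [hx.2, map_zero] at this
      exact this
    obtain ⟨e, he⟩ := hdiff x hx _ hσx
    have h1 : σ x = x + algebraMap k P.SplittingField e := by rw [← he]; ring
    change σ (σ x) = x
    rw [h1, map_add, hk, h1, add_assoc, CharTwo.add_self_eq_zero, add_zero]
  · rw [Gal.card_of_separable hsep, ← hdeg]
    have hsp := SplittingField.splits P
    obtain ⟨α, hα⟩ : ∃ α : P.SplittingField, aeval α P = 0 := by
      obtain ⟨α, hα⟩ := hsp.exists_eval_eq_zero (by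
        rw [degree_map]; exact (degree_pos_of_irreducible hirr).ne')
      exact ⟨α, by rwa [eval_map_algebraMap] at hα⟩
    have hαr : α ∈ P.rootSet P.SplittingField := mem_rootSet.2 ⟨hirr.ne_zero, hα⟩
    have htop : IntermediateField.adjoin (RatFunc k) {α} = ⊤ := by
      rw [eq_top_iff]
      intro x _
      have hx : x ∈ Algebra.adjoin (RatFunc k) (P.rootSet P.SplittingField) := by
        rw [SplittingField.adjoin_rootSet]; trivial
      refine (Algebra.adjoin_le (S := (IntermediateField.adjoin (RatFunc k) {α}).toSubalgebra) ?_) hx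
      intro y hy
      obtain ⟨e, he⟩ := hdiff α hαr y hy
      have h1 : y = α + algebraMap (RatFunc k) P.SplittingField (algebraMap k _ e) := by
        rw [← IsScalarTower.algebraMap_apply, ← he]; ring
      rw [h1]
      exact add_mem (IntermediateField.mem_adjoin_simple_self _ α)
        (IntermediateField.algebraMap_mem _ _)
    have hint : IsIntegral (RatFunc k) α := Algebra.IsIntegral.isIntegral α
    have h1 := IntermediateField.adjoin.finrank hint
    rw [htop, IntermediateField.finrank_top'] at h1
    rw [h1, ← minpoly.eq_of_irreducible hirr hα, mul_comm,
      natDegree_C_mul (inv_ne_zero (leadingCoeff_ne_zero.2 hirr.ne_zero))]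
end

section
/- Let A be an integrally closed domain with fraction field K, K' a field, ψ: A → K' a ring homomorphism, and f(x) = a_d x^d + ... + a₀ ∈ A[x] with d ≥ 1 and a_d ∉ ker(ψ). If the coefficient-wise image ψ̃(f) of f is separable over K', then f is separable over K and Gal(ψ̃(f)/K') is isomorphic to a subgroup of Gal(f/K). -/
open Polynomial

theorem aux_lift (A B Ω : Type*) [CommRing A] [CommRing B] [Algebra A B] [Algebra.IsIntegral A B]
    (hinj : Function.Injective (algebraMap A B))
    [Field Ω] [IsAlgClosed Ω] (ψ : A →+* Ω) :
    ∃ φ : B →+* Ω, φ.comp (algebraMap A B) = ψ := by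
  have : (RingHom.ker ψ).IsPrime := RingHom.ker_isPrime ψ
  obtain ⟨Q, hQ, hQP⟩ := Ideal.exists_ideal_over_prime_of_isIntegral (RingHom.ker ψ) (⊥ : Ideal B)
    (by intro x hx
        have : algebraMap A B x = 0 := hx
        rw [(injective_iff_map_eq_zero _).1 hinj x this]; exact zero_mem _)
  obtain ⟨hQ, hQP⟩ := hQP
  have : Q.LiesOver (RingHom.ker ψ) := ⟨hQP.symm⟩
  let : Algebra (A ⧸ RingHom.ker ψ) Ω := (RingHom.kerLift ψ).toAlgebra
  have : FaithfulSMul (A ⧸ RingHom.ker ψ) Ω :=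
    (faithfulSMul_iff_algebraMap_injective _ _).2 (RingHom.kerLift_injective ψ)
  have : Algebra.IsIntegral (A ⧸ RingHom.ker ψ) (B ⧸ Q) := inferInstance
  have : Module.IsTorsionFree (A ⧸ RingHom.ker ψ) Ω := inferInstance
  have : FaithfulSMul (A ⧸ RingHom.ker ψ) (B ⧸ Q) := inferInstance
  have : IsDomain (A ⧸ RingHom.ker ψ) := inferInstance
  have : IsDomain (B ⧸ Q) := inferInstance
  have : Module.IsTorsionFree (A ⧸ RingHom.ker ψ) (B ⧸ Q) :=
    Module.isTorsionFree_iff_faithfulSMul.2 inferInstance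
  have : Algebra.IsAlgebraic (A ⧸ RingHom.ker ψ) (B ⧸ Q) := Algebra.IsIntegral.isAlgebraic
  let l : (B ⧸ Q) →ₐ[A ⧸ RingHom.ker ψ] Ω := IsAlgClosed.lift
  refine ⟨l.toRingHom.comp (Ideal.Quotient.mk Q), ?_⟩
  ext a
  exact l.commutes (Ideal.Quotient.mk _ a)

theorem aux_conj (A B G Ω : Type*) [CommRing A] [CommRing B] [Algebra A B] [Group G] [Finite G]
    [MulSemiringAction G B] [Algebra.IsInvariant A B G] [Field Ω] (φ₁ φ₂ : B →+* Ω)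
    (h : φ₁.comp (algebraMap A B) = φ₂.comp (algebraMap A B)) (n : ℕ) (α : Fin n → B) :
    ∃ σ : G, ∀ i, φ₂ (α i) = φ₁ (σ • α i) := by
  cases nonempty_fintype G
  let θ : B[X] := ∑ i : Fin n, monomial i (α i)
  have hθ : ∀ i : Fin n, θ.coeff i = α i := by
    intro i
    simp [θ, coeff_monomial, Fin.val_inj]
  have hmap : ∀ q : B[X], (∀ g : G, g • q = q) → q.map φ₁ = q.map φ₂ := by
    intro q hq
    ext m
    obtain ⟨a, ha⟩ := Algebra.IsInvariant.isInvariant (A := A) (G := G) (q.coeff m)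
      (fun g => by rw [← coeff_smul, hq])
    rw [coeff_map, coeff_map, ← ha]
    exact RingHom.congr_fun h a
  let P : B[X][X] := MulSemiringAction.charpoly G θ
  have hP : P.map (mapRingHom φ₁) = P.map (mapRingHom φ₂) := by
    ext1 m
    rw [coeff_map, coeff_map]
    exact hmap _ (fun g => MulSemiringAction.smul_coeff_charpoly θ m g)
  have h0 : (P.map (mapRingHom φ₂)).eval (mapRingHom φ₂ θ) = 0 := by
    rw [eval_map_apply, MulSemiringAction.eval_charpoly, map_zero]
  rw [← hP] at h0
  simp only [P, MulSemiringAction.charpoly_eq, Polynomial.map_prod, eval_prod,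
    Finset.prod_eq_zero_iff] at h0
  obtain ⟨g, -, hg⟩ := h0
  refine ⟨g, fun i => ?_⟩
  simp only [Polynomial.map_sub, map_X, map_C, eval_sub, eval_X, eval_C, sub_eq_zero] at hg
  have := congrArg (fun q => coeff q i) hg
  simpa [hθ] using this

theorem aux_ext {F E : Type*} [Field F] [Field E] [Algebra F E] (p : F[X]) [p.IsSplittingField F E]
    (σ τ : Gal(E/F)) (h : ∀ x ∈ p.rootSet E, σ x = τ x) : σ = τ := by
  have : (σ : E →ₐ[F] E) = (τ : E →ₐ[F] E) :=
    AlgHom.ext_of_adjoin_eq_top (IsSplittingField.adjoin_rootSet E p) h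
  ext x
  exact DFunLike.congr_fun this x

theorem aux_unit
    (A : Type*) [CommRing A] [IsDomain A] [IsIntegrallyClosed A]
    (K : Type*) [Field K] [Algebra A K] [IsFractionRing A K]
    (K' : Type*) [Field K'] (ψ : A →+* K')
    (f : Polynomial A) (hu : IsUnit f.leadingCoeff)
    (p : K[X]) (hp : p = f.map (algebraMap A K))
    (p' : K'[X]) (hp' : p' = f.map ψ)
    (L : Type*) [Field L] [Algebra K L] [Algebra A L] [IsScalarTower A K L] [p.IsSplittingField K L]
    (L' : Type*) [Field L'] [Algebra K' L'] [p'.IsSplittingField K' L']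
    (hsep : p'.Separable) :
    p.Separable ∧
      ∃ e : Gal(L'/K') →* Gal(L/K), Function.Injective e := by
  classical
  let Ω := AlgebraicClosure L'
  let B := integralClosure A L
  have hAL : Function.Injective (algebraMap A L) :=
    IsScalarTower.algebraMap_eq A K L ▸ (algebraMap K L).injective.comp (IsFractionRing.injective A K)
  have hAB : Function.Injective (algebraMap A B) := fun x y h => hAL (congrArg Subtype.val h)
  let ψΩ : A →+* Ω := (algebraMap L' Ω).comp ((algebraMap K' L').comp ψ)
  obtain ⟨φ, hφ⟩ := aux_lift A B Ω hAB ψΩ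
  -- roots
  have hfL : f.map (algebraMap A L) = p.map (algebraMap K L) := by
    rw [hp, map_map, IsScalarTower.algebraMap_eq A K L]
  have hfΩ : f.map ψΩ = p'.map (algebraMap K' Ω) := by
    rw [hp', map_map]; rfl
  have hsplit : (f.map (algebraMap A L)).Splits := hfL ▸ IsSplittingField.splits L p
  have hint : ∀ x ∈ (f.map (algebraMap A L)).roots, x ∈ B := by
    intro x hx
    have h1 := (mem_roots'.1 hx).2
    obtain ⟨u, hu⟩ := hu
    refine ⟨C (↑u⁻¹ : A) * f, ?_, ?_⟩
    · rw [Monic, leadingCoeff_C_mul_of_isUnit (Units.isUnit _), ← hu]; simp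
    · rw [eval₂_mul, ← eval_map (algebraMap A L) x (p := f), h1.eq_zero, mul_zero]
  obtain ⟨s, hs⟩ : ∃ s : Multiset B, s.map B.val = (f.map (algebraMap A L)).roots := by
    refine ⟨(f.map (algebraMap A L)).roots.pmap (fun x hx => ⟨x, hx⟩) hint, ?_⟩
    rw [Multiset.map_pmap]
    exact (Multiset.pmap_eq_map _ id _ hint).trans (Multiset.map_id _)
  have hlead : (f.map (algebraMap A L)).leadingCoeff = algebraMap A L f.leadingCoeff :=
    leadingCoeff_map_of_injective hAL f
  have hfB : f.map (algebraMap A B) =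
      C (algebraMap A B f.leadingCoeff) * (s.map (fun b => X - C b)).prod := by
    apply map_injective (B.val : B →+* L) Subtype.val_injective
    have h1 := hsplit.eq_prod_roots
    rw [hlead, ← hs] at h1
    rw [map_map]
    refine Eq.trans h1 ?_
    simp [Polynomial.map_multiset_prod, Multiset.map_map, Function.comp_def]
  have hfφ : f.map ψΩ = C (ψΩ f.leadingCoeff) * ((s.map φ).map (fun b => X - C b)).prod := by
    have := congrArg (Polynomial.map φ) hfB
    rw [map_map, hφ] at this
    rw [this, ← hφ]
    simp [Polynomial.map_multiset_prod, Multiset.map_map, Function.comp_def]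
  have hψu : ψΩ f.leadingCoeff ≠ 0 := (hu.map ψΩ).ne_zero
  have hrootsΩ : (f.map ψΩ).roots = s.map φ := by
    rw [hfφ, roots_C_mul _ hψu, roots_multiset_prod_X_sub_C]
  have hnd : (s.map φ).Nodup := by
    rw [← hrootsΩ, hfΩ]
    exact nodup_roots hsep.map
  have hφinj : ∀ x ∈ s, ∀ y ∈ s, φ x = φ y → x = y := Multiset.inj_on_of_nodup_map hnd
  have hsnd : s.Nodup := hnd.of_map _
  have hp0 : p ≠ 0 := by
    intro h
    rw [hp, Polynomial.map_eq_zero_iff (IsFractionRing.injective A K)] at h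
    rw [h] at hu; simp at hu
  have hp'0 : p' ≠ 0 := hsep.ne_zero
  have hsepK : p.Separable := by
    rw [← nodup_aroots_iff_of_splits hp0 (IsSplittingField.splits L p), aroots, ← hfL, ← hs]
    exact hsnd.map Subtype.val_injective
  refine ⟨hsepK, ?_⟩
  have : FiniteDimensional K L := IsSplittingField.finiteDimensional L p
  have : IsGalois K L := IsGalois.of_separable_splitting_field hsepK
  have : IsFractionRing B L := integralClosure.isFractionRing_of_finite_extension K L
  let act : MulSemiringAction Gal(L/K) B := IsIntegralClosure.MulSemiringAction A K L B
  have : Algebra.IsInvariant A B Gal(L/K) := Algebra.isInvariant_of_isGalois A K L B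
  have hact : ∀ (σ : Gal(L/K)) (b : B), ((σ • b : B) : L) = σ (b : L) := fun σ b =>
    algebraMap_galRestrict_apply A σ b
  have hmem : ∀ b : B, b ∈ s ↔ (b : L) ∈ p.rootSet L := by
    intro b
    rw [mem_rootSet', ← mem_aroots', aroots, ← hfL, ← hs, Multiset.mem_map]
    constructor
    · intro h; exact ⟨b, h, rfl⟩
    · rintro ⟨c, hc, h⟩
      rwa [← Subtype.ext h]
  have hsmul : ∀ (σ : Gal(L/K)) (b : B), b ∈ s → σ • b ∈ s := by
    intro σ b hb
    rw [hmem] at hb ⊢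
    rw [hact, mem_rootSet_of_ne hp0] at *
    rw [← AlgEquiv.coe_algHom, aeval_algHom_apply, hb, map_zero]
  have himg : algebraMap L' Ω '' p'.rootSet L' = p'.rootSet Ω :=
    Splits.image_rootSet_algebraMap (IsSplittingField.splits L' p')
  have hmemΩ : ∀ y : Ω, y ∈ p'.rootSet Ω ↔ ∃ b ∈ s, φ b = y := by
    intro y
    rw [mem_rootSet', ← mem_aroots', aroots, ← hfΩ, hrootsΩ, Multiset.mem_map]
  have hΩL : ∀ b ∈ s, ∃ x : L', φ b = algebraMap L' Ω x := by
    intro b hb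
    have := (hmemΩ (φ b)).2 ⟨b, hb, rfl⟩
    rw [← himg] at this
    obtain ⟨x, -, hx⟩ := this
    exact ⟨x, hx.symm⟩
  have hLΩ : ∀ x ∈ p'.rootSet L', ∃ b ∈ s, φ b = algebraMap L' Ω x := by
    intro x hx
    rw [← hmemΩ, ← himg]
    exact ⟨x, hx, rfl⟩
  have hex : ∀ τ : Gal(L'/K'), ∃ σ : Gal(L/K), ∀ b ∈ s, ∀ x : L', φ b = algebraMap L' Ω x →
      φ (σ • b) = algebraMap L' Ω (τ x) := by
    intro τ
    let T : Ω ≃+* Ω := IsAlgClosure.equivOfEquiv Ω Ω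
      (τ : L' ≃+* L')
    have hT : ∀ x : L', T (algebraMap L' Ω x) = algebraMap L' Ω (τ x) := fun x =>
      IsAlgClosure.equivOfEquiv_algebraMap _ _ _ x
    obtain ⟨σ, hσ⟩ := aux_conj A B Gal(L/K) Ω φ ((T : Ω →+* Ω).comp φ) (by
      rw [RingHom.comp_assoc, hφ]
      ext a
      change algebraMap L' Ω (algebraMap K' L' (ψ a)) =
        T (algebraMap L' Ω (algebraMap K' L' (ψ a)))
      rw [hT]
      congr 1
      exact (τ.commutes _).symm) s.toList.length
      (fun i => s.toList.get i)
    refine ⟨σ, fun b hb x hx => ?_⟩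
    obtain ⟨i, hi⟩ := List.get_of_mem (Multiset.mem_toList.2 hb)
    have := hσ i
    rw [hi] at this
    rw [← this, ← hT, ← hx]; rfl
  have huniq : ∀ (τ : Gal(L'/K')) (σ σ' : Gal(L/K)),
      (∀ b ∈ s, ∀ x : L', φ b = algebraMap L' Ω x → φ (σ • b) = algebraMap L' Ω (τ x)) →
      (∀ b ∈ s, ∀ x : L', φ b = algebraMap L' Ω x → φ (σ' • b) = algebraMap L' Ω (τ x)) →
      σ = σ' := by
    intro τ σ σ' h h'
    refine aux_ext p σ σ' (fun y hy => ?_)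
    obtain ⟨b, hb, rfl⟩ : ∃ b ∈ s, (b : L) = y := by
      rw [mem_rootSet', ← mem_aroots', aroots] at hy
      change y ∈ (p.map (algebraMap K L)).roots at hy
      rw [← hfL, ← hs, Multiset.mem_map] at hy
      exact hy
    obtain ⟨x, hx⟩ := hΩL b hb
    have := hφinj _ (hsmul σ b hb) _ (hsmul σ' b hb) ((h b hb x hx).trans (h' b hb x hx).symm)
    exact (hact σ b).symm.trans ((congrArg Subtype.val this).trans (hact σ' b))
  choose e he using hex
  refine ⟨MonoidHom.mk' e ?_, ?_⟩
  · intro τ₁ τ₂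
    refine huniq (τ₁ * τ₂) _ _ (he _) ?_
    intro b hb x hx
    have := he τ₁ _ (hsmul (e τ₂) b hb) _ (he τ₂ b hb x hx)
    exact (congrArg φ (mul_smul (e τ₁) (e τ₂) b)).trans this
  · rw [injective_iff_map_eq_one]
    intro τ hτ
    refine aux_ext p' _ _ (fun x hx => ?_)
    obtain ⟨b, hb, hbx⟩ := hLΩ x hx
    have h1 := he τ b hb x hbx
    have h2 : e τ = 1 := hτ
    rw [h2, one_smul, hbx] at h1
    exact ((algebraMap L' Ω).injective h1).symm

theorem gal_of_specialization_embeds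
    (A : Type*) [CommRing A] [IsDomain A] [IsIntegrallyClosed A]
    (K : Type*) [Field K] [Algebra A K] [IsFractionRing A K]
    (K' : Type*) [Field K'] (ψ : A →+* K')
    (f : Polynomial A) (hd : 1 ≤ f.natDegree)
    (hlead : ψ f.leadingCoeff ≠ 0)
    (hsep : (f.map ψ).Separable) :
    (f.map (algebraMap A K)).Separable ∧
      ∃ e : (f.map ψ).Gal →* (f.map (algebraMap A K)).Gal, Function.Injective e := by
  have hP : (RingHom.ker ψ).IsPrime := RingHom.ker_isPrime ψ
  let A' := Localization.AtPrime (RingHom.ker ψ)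
  have hle : (RingHom.ker ψ).primeCompl ≤ nonZeroDivisors A :=
    Ideal.primeCompl_le_nonZeroDivisors _
  have : IsDomain A' := IsLocalization.isDomain_localization hle
  have : IsIntegrallyClosed A' := isIntegrallyClosed_of_isLocalization A' (RingHom.ker ψ).primeCompl hle
  let : Algebra A' K := IsLocalization.localizationAlgebraOfSubmonoidLe A' K
    (RingHom.ker ψ).primeCompl (nonZeroDivisors A) hle
  have : IsScalarTower A A' K := IsLocalization.localization_isScalarTower_of_submonoid_le A' K
    (RingHom.ker ψ).primeCompl (nonZeroDivisors A) hle
  have : IsFractionRing A' K :=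
    IsFractionRing.isFractionRing_of_isDomain_of_isLocalization (RingHom.ker ψ).primeCompl A' K
  let ψ' : A' →+* K' := IsLocalization.lift (M := (RingHom.ker ψ).primeCompl) (g := ψ)
    (fun y => isUnit_iff_ne_zero.2 (fun h => y.2 h))
  have hψ' : ψ'.comp (algebraMap A A') = ψ := IsLocalization.lift_comp _
  have hA : (algebraMap A' K).comp (algebraMap A A') = algebraMap A K :=
    (IsScalarTower.algebraMap_eq A A' K).symm
  have h1 : (f.map (algebraMap A A')).map ψ' = f.map ψ := by rw [map_map, hψ']
  have h2 : (f.map (algebraMap A A')).map (algebraMap A' K) = f.map (algebraMap A K) := by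
    rw [map_map, hA]
  let L := (f.map (algebraMap A K)).SplittingField
  let : Algebra A' L := ((algebraMap K L).comp (algebraMap A' K)).toAlgebra
  have : @IsScalarTower A' K L _ Algebra.toSMul Algebra.toSMul :=
    IsScalarTower.of_algebraMap_eq (fun _ => rfl)
  have key := aux_unit A' K K' ψ' (f.map (algebraMap A A'))
    (by
      rw [leadingCoeff_map_of_injective (IsLocalization.injective A' hle)]
      exact IsLocalization.map_units A' (⟨_, hlead⟩ : (RingHom.ker ψ).primeCompl))
    _ h2.symm _ h1.symm (f.map (algebraMap A K)).SplittingField (f.map ψ).SplittingField hsep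
  exact key
end
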